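/- arXiv:1111.6245 — 6 statements merged into one kernel-verified Lean document; each statement's English description precedes it below -/
import Mathlib

section
/- Let X be a measurable space, π a probability measure on X, Q a Markov kernel from X to X, and α : X × X → [0,1] a measurable function. Define s(x) = ∫_X (1 − α(x,x')) Q(x,dx') and the kernel P(x, B) = ∫_B α(x,x') Q(x,dx') + s(x)·1_B(x). Then P is a Markov kernel, and P satisfies detailed balance with respect to π (i.e., π ⊗ P is symmetric) if and only if the measure α · (π ⊗ Q) on X × X (the measure with density α with respect to π ⊗ Q) is symmetric. -/
/-! The measure `π ⊗ₘ P` splits as `α · (π ⊗ₘ Q) + D`, where the rejection part `D` is the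
image of `s · π` under the diagonal map `x ↦ (x, x)`. The swap fixes the diagonal, so `D` is
symmetric, and `D` is finite because `s ≤ 1`. Hence `D` can be cancelled, and one of the other two
measures is symmetric exactly when the other is. -/

open MeasureTheory ProbabilityTheory ENNReal

/-- A finite symmetric summand does not affect whether a measure is symmetric. -/
lemma map_swap_add_eq_iff {X : Type*} [MeasurableSpace X] (μ D : Measure (X × X))
    [IsFiniteMeasure D] (hD : D.map Prod.swap = D) :
    (μ + D).map Prod.swap = μ + D ↔ μ.map Prod.swap = μ := by
  rw [Measure.map_add _ _ measurable_swap, hD]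
  refine ⟨fun h => ?_, fun h => by rw [h]⟩
  ext A hA
  have h' := congrArg (fun ν : Measure (X × X) => ν A) h
  simp only [Measure.add_apply] at h'
  exact (ENNReal.add_left_inj (measure_ne_top D A)).1 h'

/-- **The Metropolis–Hastings–Green kernel and its reversibility.**
Given a probability measure `π`, a Markov proposal kernel `Q` and a measurable
acceptance probability `α : X × X → [0,1]`, define
`P(x, B) = ∫_B α(x,x') Q(x,dx') + s(x) 1_B(x)` with
`s(x) = ∫ (1 - α(x,x')) Q(x,dx')`.  Then `P` is a Markov kernel, and `P` satisfies
detailed balance with respect to `π` (i.e. `π ⊗ₘ P` is symmetric) if and only if the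
measure `α · (π ⊗ₘ Q)` is symmetric. -/
theorem mhg_kernel_markov_and_detailed_balance_iff
    {X : Type*} [MeasurableSpace X]
    (π : Measure X) [IsProbabilityMeasure π]
    (Q : Kernel X X) [IsMarkovKernel Q]
    (α : X × X → ℝ≥0∞) (hαm : Measurable α) (hα1 : ∀ p, α p ≤ 1)
    (P : Kernel X X)
    (hP : ∀ x : X, ∀ B : Set X, MeasurableSet B →
      P x B = (∫⁻ x' in B, α (x, x') ∂(Q x))
        + (∫⁻ x', (1 - α (x, x')) ∂(Q x)) * B.indicator (fun _ => 1) x) :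
    IsMarkovKernel P ∧
      ((π ⊗ₘ P).map Prod.swap = π ⊗ₘ P ↔
        ((π ⊗ₘ Q).withDensity α).map Prod.swap = (π ⊗ₘ Q).withDensity α) := by
  have hαx : ∀ x, Measurable fun x' => α (x, x') := fun x => hαm.comp measurable_prodMk_left
  have hMarkov : IsMarkovKernel P := by
    refine ⟨fun x => ⟨?_⟩⟩
    rw [hP x _ MeasurableSet.univ]
    simp only [Measure.restrict_univ, Set.indicator_univ, mul_one]
    rw [← lintegral_add_left (hαx x)]
    simp [add_tsub_cancel_of_le (hα1 _)]
  refine ⟨hMarkov, ?_⟩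
  set s : X → ℝ≥0∞ := fun x => ∫⁻ x', (1 - α (x, x')) ∂(Q x) with hs
  have hsm : Measurable s :=
    Measurable.lintegral_kernel_prod_right' (f := fun p => 1 - α p) (measurable_const.sub hαm)
  have hs1 : ∀ x, s x ≤ 1 := fun x =>
    (lintegral_mono (fun _ => tsub_le_self)).trans (by simp)
  have hdiag : Measurable fun x : X => (x, x) := measurable_id.prodMk measurable_id
  have hfin : IsFiniteMeasure (π.withDensity s) :=
    isFiniteMeasure_withDensity
      (((lintegral_mono hs1).trans_lt (by simp)).ne)
  have hdecomp : π ⊗ₘ P =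
      (π ⊗ₘ Q).withDensity α + (π.withDensity s).map fun x => (x, x) := by
    ext A hA
    have hpre : MeasurableSet ((fun x : X => (x, x)) ⁻¹' A) := hdiag hA
    rw [Measure.add_apply, Measure.compProd_apply hA, withDensity_apply _ hA,
      Measure.map_apply hdiag hA, withDensity_apply _ hpre, ← lintegral_indicator hA,
      ← lintegral_indicator hpre, Measure.lintegral_compProd (hαm.indicator hA),
      ← lintegral_add_right _ (hsm.indicator hpre)]
    refine lintegral_congr fun x => ?_
    rw [hP x _ (measurable_prodMk_left hA), ← lintegral_indicator (measurable_prodMk_left hA)]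
    congr 1
    by_cases hx : (x, x) ∈ A <;> simp [Set.indicator, hx, hs]
  have hsymm : ((π.withDensity s).map fun x => (x, x)).map Prod.swap =
      (π.withDensity s).map fun x => (x, x) := by
    rw [Measure.map_map measurable_swap hdiag]
    rfl
  rw [hdecomp]
  exact map_swap_add_eq_iff _ _ hsymm
end

section
/- Let μ be a σ-finite measure on X × X such that μ and μ^⊤ are mutually absolutely continuous, and let r be a (measurable, nonnegative) density of μ^⊤ with respect to μ. Then the measure min(1, r) · μ on X × X is symmetric. (In the Metropolis–Hastings–Green setting, taking μ = π ⊗ Q, this shows that the acceptance probability α(x,x') = min{1, r(x,x')} with r the Radon–Nikodym derivative of (π ⊗ Q)^⊤ with respect to π ⊗ Q makes the resulting Metropolis–Hastings–Green kernel reversible with respect to π.) -/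
open MeasureTheory ENNReal

/-!
Since swapping is an involution, swapping both sides of `μ^⊤ = r · μ` gives
`μ = (r * (r ∘ swap)) · μ`, so by σ-finiteness `r * (r ∘ swap) = 1` holds `μ`-almost everywhere.
The swap of `min(1, r) · μ` is `min(1, r ∘ swap) · μ^⊤ = (r * min(1, r ∘ swap)) · μ`, and
`r * min(1, r ∘ swap) = min(r, r * (r ∘ swap)) = min(r, 1)` almost everywhere.
-/

/-- If `μ^⊤ = r · μ`, then swapping `f · μ` yields the density `r * (f ∘ swap)` with respect
to `μ`. -/
lemma map_swap_withDensity_of_density {X : Type*} [MeasurableSpace X]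
    (μ : Measure (X × X)) (r f : X × X → ℝ≥0∞) (hr : Measurable r) (hf : Measurable f)
    (hdens : μ.map Prod.swap = μ.withDensity r) :
    (μ.withDensity f).map Prod.swap = μ.withDensity (r * (f ∘ Prod.swap)) := by
  have hfs : Measurable (f ∘ Prod.swap) := hf.comp measurable_swap
  rw [withDensity_mul μ hr hfs, ← hdens]
  ext s hs
  rw [Measure.map_apply measurable_swap hs, withDensity_apply _ (measurable_swap hs),
    withDensity_apply _ hs, setLIntegral_map hs hfs measurable_swap]
  simp

/-- **Symmetry of the accepted-move measure.**
Let `μ` be a σ-finite measure on `X × X` such that `μ` and its swap `μ^⊤` are mutually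
absolutely continuous, and let `r` be a measurable density of `μ^⊤` with respect to `μ`.
Then the measure `min(1, r) · μ` is symmetric under the swap map. -/
theorem min_one_ratio_withDensity_symmetric
    {X : Type*} [MeasurableSpace X]
    (μ : Measure (X × X)) [SigmaFinite μ]
    (h₁ : μ.map Prod.swap ≪ μ) (h₂ : μ ≪ μ.map Prod.swap)
    (r : X × X → ℝ≥0∞) (hr : Measurable r)
    (hdens : μ.map Prod.swap = μ.withDensity r) :
    (μ.withDensity fun p => min 1 (r p)).map Prod.swap
      = μ.withDensity fun p => min 1 (r p) := by
  have hinv : μ.withDensity (r * (r ∘ Prod.swap)) = μ.withDensity 1 := by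
    rw [← map_swap_withDensity_of_density μ r r hr hr hdens, ← hdens,
      Measure.map_map measurable_swap measurable_swap, Prod.swap_swap_eq, Measure.map_id,
      withDensity_one]
  have hone : r * (r ∘ Prod.swap) =ᵐ[μ] 1 :=
    (withDensity_eq_iff_of_sigmaFinite (hr.mul (hr.comp measurable_swap)).aemeasurable
      aemeasurable_const).1 hinv
  rw [map_swap_withDensity_of_density μ r _ hr (measurable_const.min hr) hdens]
  refine withDensity_congr_ae ?_
  filter_upwards [hone] with p hp
  have hp' : r p * r p.swap = 1 := hp
  change r p * min 1 (r p.swap) = min 1 (r p)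
  rw [mul_min, mul_one, hp', min_comm]
end

section
/- Let μ be a σ-finite measure on X × X such that μ and μ^⊤ are mutually absolutely continuous, and let r be a (measurable, nonnegative) density of μ^⊤ with respect to μ. Then for μ-almost every (x,x') ∈ X × X one has r(x,x') > 0 and r(x,x') · r(x',x) = 1. -/
/-!
Write `ν` for the swap of `μ`, so `ν = r μ`. Since the swap is an involution, swapping this identity
gives `μ = (r ∘ swap) ν = r (r ∘ swap) μ`. As `μ` is σ-finite, its density with respect to itself
is almost everywhere unique (`withDensity_eq_iff_of_sigmaFinite`), hence `r (r ∘ swap) = 1` almost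
everywhere; where this holds, `r` cannot vanish.
-/

open MeasureTheory ENNReal

/-- **Almost-sure positivity and reciprocity of the MHG ratio.**
Let `μ` be a σ-finite measure on `X × X` such that `μ` and its swap `μ^⊤` are mutually
absolutely continuous, and let `r` be a measurable density of `μ^⊤` with respect to `μ`.
Then for `μ`-almost every `(x, x')` one has `r(x,x') > 0` and `r(x,x') * r(x',x) = 1`. -/
theorem ratio_pos_and_reciprocal_ae
    {X : Type*} [MeasurableSpace X]
    (μ : Measure (X × X)) [SigmaFinite μ]
    (h₁ : μ.map Prod.swap ≪ μ) (h₂ : μ ≪ μ.map Prod.swap)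
    (r : X × X → ℝ≥0∞) (hr : Measurable r)
    (hdens : μ.map Prod.swap = μ.withDensity r) :
    ∀ᵐ p ∂μ, 0 < r p ∧ r p * r p.swap = 1 := by
  have hrs : Measurable fun p : X × X => r p.swap := hr.comp measurable_swap
  -- Swapping `μ.map swap = r μ` gives `μ = (r ∘ swap) (μ.map swap)`.
  have hμ : μ = (μ.map Prod.swap).withDensity (fun p => r p.swap) := by
    ext s hs
    have hss : MeasurableSet (Prod.swap ⁻¹' s : Set (X × X)) := measurable_swap hs
    have e : μ s = μ.map Prod.swap (Prod.swap ⁻¹' s) := by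
      rw [Measure.map_apply measurable_swap hss, ← Set.preimage_comp, Prod.swap_swap_eq,
        Set.preimage_id]
    rw [e, hdens, withDensity_apply _ hss, ← hdens, withDensity_apply _ hs,
      setLIntegral_map hs hrs measurable_swap]
    simp
  -- Substituting the density once more, `r * (r ∘ swap)` and `1` are both densities of `μ`
  -- with respect to itself, so they agree almost everywhere by σ-finiteness.
  have hmul : μ.withDensity (r * fun p => r p.swap) = μ.withDensity 1 := by
    rw [withDensity_mul μ hr hrs, ← hdens, ← hμ, withDensity_one]
  have hae := (withDensity_eq_iff_of_sigmaFinite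
    (hr.mul hrs).aemeasurable measurable_one.aemeasurable).1 hmul
  filter_upwards [hae] with p hp
  have hp' : r p * r p.swap = 1 := hp
  refine ⟨pos_iff_ne_zero.2 fun h0 => ?_, hp'⟩
  simp [h0] at hp'
end

section
/- (MHG ratio for mixtures of proposal kernels.) Let X be a measurable space, M a countable set, and for each m ∈ M let R_m be a finite measure on X × X. Assume: (i) there are pairwise disjoint measurable sets W_m ⊆ X × X such that R_m is supported by W_m, i.e., R_m((X × X) \ W_m) = 0; (ii) there is a bijection φ : M → M such that W_{φ(m)} = W_m^⊤ for every m, where W^⊤ = {(x',x) : (x,x') ∈ W}; (iii) for every m, the measure (R_{φ(m)})^⊤ is absolutely continuous with respect to R_m, with density ρ_m. Let R = Σ_{m∈M} R_m, assumed σ-finite, and define r : X × X → [0,∞) by r(x,x') = ρ_m(x,x') if (x,x') ∈ W_m, and r(x,x') = 0 if (x,x') ∉ ⋃_m W_m. Then for every measurable A ⊆ X × X, ∬_A r(x,x') R(dx,dx') = R(A^⊤), where A^⊤ = {(x',x) : (x,x') ∈ A}. In particular R^⊤ is absolutely continuous with respect to R, with density r. -/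
/-! On the support `W m` of `R m` the function `r` coincides with `ρ m`, so
`r · R m = ρ m · R m = (R (φ m))^⊤`. Summing over `m` and reindexing along the bijection `φ`
gives `r · R = ∑ m, (R (φ m))^⊤ = R^⊤`. -/

open MeasureTheory ENNReal

/-- **MHG ratio for mixtures of proposal kernels.**
Let `R m`, `m ∈ M` (countable), be finite measures on `X × X` supported by pairwise disjoint
measurable sets `W m`, and let `φ : M ≃ M` be a bijection pairing each move with its reverse
move, `W (φ m) = (W m)^⊤`.  Assume that for each `m` the swapped measure `(R (φ m))^⊤` is
absolutely continuous with respect to `R m` with density `ρ m`.  Let `R = Σ_m R m` be σ-finite,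
and let `r` be the function equal to `ρ m` on `W m` and to `0` outside `⋃ m, W m`.  Then for
every measurable `A ⊆ X × X`, `∫_A r dR = R(A^⊤)`; in particular `R^⊤ = r · R`. -/
theorem mhg_ratio_mixture
    {X : Type*} [MeasurableSpace X] {M : Type*} [Countable M]
    (R : M → Measure (X × X)) (hRfin : ∀ m, IsFiniteMeasure (R m))
    (W : M → Set (X × X)) (hWmeas : ∀ m, MeasurableSet (W m))
    (hWdisj : Pairwise (Function.onFun Disjoint W))
    (hsupp : ∀ m, R m ((W m)ᶜ) = 0)
    (φ : M ≃ M) (hφ : ∀ m, W (φ m) = Prod.swap ⁻¹' (W m))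
    (ρ : M → X × X → ℝ≥0∞) (hρmeas : ∀ m, Measurable (ρ m))
    (hρ : ∀ m, (R (φ m)).map Prod.swap = (R m).withDensity (ρ m))
    (hσ : SigmaFinite (Measure.sum R))
    (r : X × X → ℝ≥0∞) (hrmeas : Measurable r)
    (hrW : ∀ m, ∀ p ∈ W m, r p = ρ m p)
    (hr0 : ∀ p, p ∉ ⋃ m, W m → r p = 0) :
    (∀ A : Set (X × X), MeasurableSet A →
        ∫⁻ p in A, r p ∂(Measure.sum R) = Measure.sum R (Prod.swap ⁻¹' A)) ∧
      (Measure.sum R).map Prod.swap = (Measure.sum R).withDensity r := by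
  have hdens : ∀ m, (R m).withDensity r = (R (φ m)).map Prod.swap := by
    intro m
    rw [hρ m]
    refine withDensity_congr_ae ?_
    have hW : ∀ᵐ p ∂(R m), p ∈ W m := by
      rw [ae_iff]
      exact hsupp m
    filter_upwards [hW] with p hp using hrW m p hp
  have key : ∀ A : Set (X × X), MeasurableSet A →
      ∫⁻ p in A, r p ∂(Measure.sum R) = Measure.sum R (Prod.swap ⁻¹' A) := by
    intro A hA
    rw [← withDensity_apply r hA, withDensity_sum, Measure.sum_apply _ hA,
      Measure.sum_apply _ (measurable_swap hA),
      ← φ.tsum_eq (fun m => R m (Prod.swap ⁻¹' A))]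
    refine tsum_congr fun m => ?_
    rw [hdens m, Measure.map_apply measurable_swap hA]
  refine ⟨key, Measure.ext fun A hA => ?_⟩
  rw [Measure.map_apply measurable_swap hA, withDensity_apply r hA, key A hA]
end

section
/- (MHG ratio for the canonical trans-dimensional mixture representation.) Let X be a measurable space, {X_k}_{k∈K} a countable measurable partition of X, π a probability measure on X, Q a Markov kernel from X to X, and R = π ⊗ Q. For each pair (k,l) ∈ K × K let R_{k,l} denote the restriction of R to X_k × X_l, and assume that (R_{l,k})^⊤ is absolutely continuous with respect to R_{k,l}, with density ρ_{k,l}. Define r : X × X → [0,∞) by r(x,x') = ρ_{k,l}(x,x') for (x,x') ∈ X_k × X_l. Then for every measurable A ⊆ X × X, ∬_A r(x,x') R(dx,dx') = R(A^⊤); in particular R^⊤ is absolutely continuous with respect to R with density r. -/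
open MeasureTheory ProbabilityTheory ENNReal

/-!
It suffices to compare `R^⊤` and `r · R` on each cell `Xp k ×ˢ Xp l`, since these countably many
cells cover `X × X`. The swap map exchanges the cells `(k, l)` and `(l, k)`, so `R^⊤` restricted
to `Xp k ×ˢ Xp l` is `(R_{l,k})^⊤ = ρ k l · R_{k,l}`, and `ρ k l` agrees with `r` there.
The formula for `∫_A r dR` is then the equality of measures evaluated at `A`.
-/

/-- **MHG ratio for the canonical trans-dimensional mixture representation.**
Let `{Xp k}_{k ∈ K}` be a countable measurable partition of `X`, `π` a probability measure,
`Q` a Markov kernel, and `R = π ⊗ₘ Q`.  For each pair `(k, l)` let `R_{k,l}` be the restriction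
of `R` to `Xp k ×ˢ Xp l`, and assume `(R_{l,k})^⊤` is absolutely continuous with respect to
`R_{k,l}` with density `ρ k l`.  If `r` coincides with `ρ k l` on `Xp k ×ˢ Xp l`, then for every
measurable `A`, `∫_A r dR = R(A^⊤)`; in particular `R^⊤ = r · R`. -/
theorem mhg_ratio_transdimensional_mixture
    {X : Type*} [MeasurableSpace X] {K : Type*} [Countable K]
    (Xp : K → Set X) (hXmeas : ∀ k, MeasurableSet (Xp k))
    (hXdisj : Pairwise (Function.onFun Disjoint Xp))
    (hXcover : (⋃ k, Xp k) = Set.univ)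
    (π : Measure X) [IsProbabilityMeasure π]
    (Q : Kernel X X) [IsMarkovKernel Q]
    (ρ : K → K → X × X → ℝ≥0∞) (hρmeas : ∀ k l, Measurable (ρ k l))
    (hρ : ∀ k l, ((π ⊗ₘ Q).restrict (Xp l ×ˢ Xp k)).map Prod.swap
        = ((π ⊗ₘ Q).restrict (Xp k ×ˢ Xp l)).withDensity (ρ k l))
    (r : X × X → ℝ≥0∞) (hrmeas : Measurable r)
    (hr : ∀ k l, ∀ p ∈ Xp k ×ˢ Xp l, r p = ρ k l p) :
    (∀ A : Set (X × X), MeasurableSet A →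
        ∫⁻ p in A, r p ∂(π ⊗ₘ Q) = (π ⊗ₘ Q) (Prod.swap ⁻¹' A)) ∧
      (π ⊗ₘ Q).map Prod.swap = (π ⊗ₘ Q).withDensity r := by
  have key : (π ⊗ₘ Q).map Prod.swap = (π ⊗ₘ Q).withDensity r := by
    have hcover : (⋃ i : K × K, Xp i.1 ×ˢ Xp i.2) = Set.univ := by
      rw [← Set.univ_prod_univ, ← hXcover, Set.iUnion_prod]
    refine (Measure.ext_iff_of_iUnion_eq_univ hcover).2 ?_
    rintro ⟨k, l⟩
    have hkl : MeasurableSet (Xp k ×ˢ Xp l) := (hXmeas k).prod (hXmeas l)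
    rw [Measure.restrict_map measurable_swap hkl, Set.preimage_swap_prod, hρ k l,
      restrict_withDensity hkl]
    refine withDensity_congr_ae ?_
    filter_upwards [ae_restrict_mem hkl] with p hp
    exact (hr k l p hp).symm
  refine ⟨fun A hA => ?_, key⟩
  rw [← withDensity_apply r hA, ← key, Measure.map_apply measurable_swap hA]
end

section
/- (Density identity for elementary birth and death kernels.) Let (S, ν) be a σ-finite measure space, k ∈ ℕ, and 1 ≤ i ≤ k+1. Let q : S → [0,∞) be measurable with ∫_S q dν = 1. Let π_k and π_{k+1} be probability measures on S^k and S^{k+1} with densities f_k and f_{k+1} with respect to ν^⊗k and ν^⊗(k+1) respectively. Let B_i be the Markov kernel from S^k to S^{k+1} defined by B_i(s, ·) = pushforward of the measure q·ν under the map s* ↦ s ⊕_i s*, and let D_i be the kernel from S^{k+1} to S^k defined by D_i(t, ·) = δ_{t_{-i}} (the Dirac mass at t with its i-th component removed). Let ι_i : S^k × S → S^k × S^{k+1} be the map (s, s*) ↦ (s, s ⊕_i s*). Then: (a) π_k ⊗ B_i equals the pushforward under ι_i of the measure f_k(s) q(s*) d(ν^⊗k ⊗ ν)(s, s*); and (b)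 (π_{k+1} ⊗ D_i)^⊤ equals the pushforward under ι_i of the measure f_{k+1}(s ⊕_i s*) d(ν^⊗k ⊗ ν)(s, s*). Consequently, on the set where f_k(s) q(s*) > 0, the measure (π_{k+1} ⊗ D_i)^⊤ has density f_{k+1}(s ⊕_i s*) / (f_k(s) q(s*)) with respect to π_k ⊗ B_i. -/
/-! Write `ι (s, x) = (s, s ⊕_i x)`. Both identities of measures are checked on nonnegative
measurable test functions. For the birth kernel this is Tonelli's theorem. For the death kernel
the point is that `(s, x) ↦ s ⊕_i x` carries `ν^⊗k ⊗ ν` to `ν^⊗(k+1)`, with `t ↦ (t_{-i}, t_i)`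
as its inverse (`measurePreserving_insertNth`). Both measures are thus pushforwards under the same
map `ι` of measures with a density with respect to `ν^⊗k ⊗ ν`, so the density on
`{f_k q > 0}` is the quotient of the two densities. The densities take values in `[0, ∞]`, and
dividing is legitimate because `f_k` and `q` have finite integrals and hence are finite a.e. -/

open MeasureTheory ProbabilityTheory ENNReal

theorem measurable_insertNth {S : Type*} [MeasurableSpace S] {k : ℕ} (i : Fin (k + 1)) :
    Measurable fun p : (Fin k → S) × S => (i.insertNth p.2 p.1 : Fin (k + 1) → S) :=
  (MeasurableEquiv.piFinSuccAbove (fun _ : Fin (k + 1) => S) i).symm.measurable.comp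
    measurable_swap

/-- Inserting a coordinate identifies `ν^⊗k ⊗ ν` with `ν^⊗(k+1)`. -/
theorem measurePreserving_insertNth {S : Type*} [MeasurableSpace S] (ν : Measure S)
    [SigmaFinite ν] {k : ℕ} (i : Fin (k + 1)) :
    MeasurePreserving (fun p : (Fin k → S) × S => (i.insertNth p.2 p.1 : Fin (k + 1) → S))
      ((Measure.pi fun _ : Fin k => ν).prod ν) (Measure.pi fun _ : Fin (k + 1) => ν) :=
  ((measurePreserving_piFinSuccAbove (fun _ : Fin (k + 1) => ν) i).symm _).comp
    Measure.measurePreserving_swap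

/-- **Density identity for elementary birth and death kernels.**
Let `(S, ν)` be a σ-finite measure space, `q` a probability density with respect to `ν`,
and let `π_k = f_k · ν^⊗k`, `π_{k+1} = f_{k+1} · ν^⊗(k+1)` be probability measures.
Let `B` be the elementary birth kernel inserting a new component drawn from `q · ν` at
position `i`, and `D` the elementary death kernel removing the `i`-th component.
Then (a) `π_k ⊗ₘ B` is the pushforward under `ι_i : (s, s*) ↦ (s, s ⊕_i s*)` of the measure
with density `f_k(s) q(s*)` w.r.t. `ν^⊗k ⊗ ν`; (b) `(π_{k+1} ⊗ₘ D)^⊤` is the pushforward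
under `ι_i` of the measure with density `f_{k+1}(s ⊕_i s*)`; consequently, on the set where
`f_k(s) q(s*) > 0`, the measure `(π_{k+1} ⊗ₘ D)^⊤` has density
`f_{k+1}(s ⊕_i s*) / (f_k(s) q(s*))` with respect to `π_k ⊗ₘ B`. -/
theorem birth_death_density_identity
    {S : Type*} [MeasurableSpace S] (ν : Measure S) [SigmaFinite ν]
    (k : ℕ) (i : Fin (k + 1))
    (q : S → ℝ≥0∞) (hq : Measurable q) (hq1 : ∫⁻ s, q s ∂ν = 1)
    (f : (Fin k → S) → ℝ≥0∞) (hf : Measurable f)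
    (g : (Fin (k + 1) → S) → ℝ≥0∞) (hg : Measurable g)
    (πk : Measure (Fin k → S)) [IsProbabilityMeasure πk]
    (hπk : πk = (Measure.pi fun _ : Fin k => ν).withDensity f)
    (πk1 : Measure (Fin (k + 1) → S)) [IsProbabilityMeasure πk1]
    (hπk1 : πk1 = (Measure.pi fun _ : Fin (k + 1) => ν).withDensity g)
    (B : Kernel (Fin k → S) (Fin (k + 1) → S)) [IsSFiniteKernel B]
    (hB : ∀ s : Fin k → S, B s = (ν.withDensity q).map fun t : S => i.insertNth t s)
    (D : Kernel (Fin (k + 1) → S) (Fin k → S)) [IsSFiniteKernel D]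
    (hD : ∀ t : Fin (k + 1) → S, D t = Measure.dirac (i.removeNth t)) :
    (πk ⊗ₘ B
        = (((Measure.pi fun _ : Fin k => ν).prod ν).withDensity
            fun p => f p.1 * q p.2).map
              (fun p : (Fin k → S) × S => (p.1, i.insertNth p.2 p.1))) ∧
    ((πk1 ⊗ₘ D).map Prod.swap
        = (((Measure.pi fun _ : Fin k => ν).prod ν).withDensity
            fun p => g (i.insertNth p.2 p.1)).map
              (fun p : (Fin k → S) × S => (p.1, i.insertNth p.2 p.1))) ∧
    (∀ A : Set ((Fin k → S) × (Fin (k + 1) → S)), MeasurableSet A →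
        A ⊆ {p | 0 < f p.1 * q (p.2 i)} →
        (πk1 ⊗ₘ D).map Prod.swap A
          = ∫⁻ p in A, g p.2 / (f p.1 * q (p.2 i)) ∂(πk ⊗ₘ B)) := by
  have hins := measurable_insertNth (S := S) i
  have hι : Measurable fun p : (Fin k → S) × S =>
      (p.1, (i.insertNth p.2 p.1 : Fin (k + 1) → S)) := measurable_fst.prodMk hins
  have hfq : Measurable fun p : (Fin k → S) × S => f p.1 * q p.2 := by fun_prop
  have hgi : Measurable fun p : (Fin k → S) × S => g (i.insertNth p.2 p.1) := hg.comp hins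
  have ha : πk ⊗ₘ B
      = (((Measure.pi fun _ : Fin k => ν).prod ν).withDensity
          fun p => f p.1 * q p.2).map
            (fun p : (Fin k → S) × S => (p.1, i.insertNth p.2 p.1)) := by
    refine Measure.ext_of_lintegral _ fun h hh => ?_
    have hhι : Measurable fun p : (Fin k → S) × S =>
        h (p.1, (i.insertNth p.2 p.1 : Fin (k + 1) → S)) := hh.comp hι
    rw [Measure.lintegral_compProd hh, lintegral_map hh hι,
      lintegral_withDensity_eq_lintegral_mul _ hfq hhι, hπk,
      lintegral_withDensity_eq_lintegral_mul _ hf hh.lintegral_kernel_prod_right',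
      lintegral_prod _ (hfq.mul hhι).aemeasurable]
    refine lintegral_congr fun s => ?_
    have hs : Measurable fun x : S => (i.insertNth x s : Fin (k + 1) → S) :=
      hins.comp (measurable_const.prodMk measurable_id)
    have hhs : Measurable fun t : Fin (k + 1) → S => h (s, t) := hh.comp measurable_prodMk_left
    have hhx : Measurable fun x : S => h (s, (i.insertNth x s : Fin (k + 1) → S)) := hhs.comp hs
    simp only [Pi.mul_apply]
    rw [hB, lintegral_map hhs hs, lintegral_withDensity_eq_lintegral_mul _ hq hhx,
      ← lintegral_const_mul _ (hq.mul hhx)]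
    simp only [Pi.mul_apply, mul_assoc]
  have hb : (πk1 ⊗ₘ D).map Prod.swap
      = (((Measure.pi fun _ : Fin k => ν).prod ν).withDensity
          fun p => g (i.insertNth p.2 p.1)).map
            (fun p : (Fin k → S) × S => (p.1, i.insertNth p.2 p.1)) := by
    refine Measure.ext_of_lintegral _ fun h hh => ?_
    have hrem : Measurable fun t : Fin (k + 1) → S => (i.removeNth t : Fin k → S) :=
      measurable_pi_lambda _ fun j => measurable_pi_apply _
    have hhr : Measurable fun t : Fin (k + 1) → S => h (i.removeNth t, t) :=
      hh.comp (hrem.prodMk measurable_id)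
    have hhs : Measurable fun p : (Fin (k + 1) → S) × (Fin k → S) => h p.swap :=
      hh.comp measurable_swap
    have hhι : Measurable fun p : (Fin k → S) × S =>
        h (p.1, (i.insertNth p.2 p.1 : Fin (k + 1) → S)) := hh.comp hι
    rw [lintegral_map hh measurable_swap, Measure.lintegral_compProd hhs,
      lintegral_map hh hι, lintegral_withDensity_eq_lintegral_mul _ hgi hhι]
    have hdirac : ∀ t, ∫⁻ s, h (Prod.swap (t, s)) ∂(D t) = h (i.removeNth t, t) := fun t => by
      have hht : Measurable fun s : Fin k → S => h (s, t) := hh.comp measurable_prodMk_right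
      simp only [Prod.swap_prod_mk]
      rw [hD, lintegral_dirac' _ hht]
    simp only [hdirac]
    rw [hπk1, lintegral_withDensity_eq_lintegral_mul _ hg hhr,
      ← (measurePreserving_insertNth ν i).lintegral_comp (hg.mul hhr)]
    simp only [Pi.mul_apply, Fin.removeNth_insertNth]
  refine ⟨ha, hb, fun A hA hAs => ?_⟩
  -- `f * q` may be `∞`, where `f * q * (g / (f * q)) = 0`, so this set has to be null.
  have hf_fin : ∀ᵐ s ∂(Measure.pi fun _ : Fin k => ν), f s < ∞ := by
    refine ae_lt_top hf ?_
    have h1 : πk Set.univ = 1 := measure_univ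
    rw [hπk, withDensity_apply _ MeasurableSet.univ, setLIntegral_univ] at h1
    simp [h1]
  have hq_fin : ∀ᵐ x ∂ν, q x < ∞ := ae_lt_top hq (by simp [hq1])
  have hf_fin' : ∀ᵐ p ∂((Measure.pi fun _ : Fin k => ν).prod ν), f p.1 < ∞ :=
    Measure.quasiMeasurePreserving_fst.ae hf_fin
  have hq_fin' : ∀ᵐ p ∂((Measure.pi fun _ : Fin k => ν).prod ν), q p.2 < ∞ :=
    Measure.quasiMeasurePreserving_snd.ae hq_fin
  have hF : Measurable fun p : (Fin k → S) × (Fin (k + 1) → S) =>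
      g p.2 / (f p.1 * q (p.2 i)) :=
    (hg.comp measurable_snd).div ((hf.comp measurable_fst).mul
      (hq.comp ((measurable_pi_apply i).comp measurable_snd)))
  have hFι : Measurable fun p : (Fin k → S) × S =>
      g (i.insertNth p.2 p.1) / (f p.1 * q ((i.insertNth p.2 p.1 : Fin (k + 1) → S) i)) :=
    hF.comp hι
  rw [hb, ha, Measure.map_apply hι hA, withDensity_apply _ (hι hA), setLIntegral_map hA hF hι,
    setLIntegral_withDensity_eq_setLIntegral_mul _ hfq hFι (hι hA)]
  refine setLIntegral_congr_fun_ae (hι hA) ?_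
  filter_upwards [hf_fin', hq_fin'] with p hfp hqp hp
  have hpos := hAs hp
  simp only [Set.mem_ofPred_eq, Fin.insertNth_apply_same] at hpos
  simp only [Pi.mul_apply, Fin.insertNth_apply_same]
  exact (ENNReal.mul_div_cancel hpos.ne' (ENNReal.mul_lt_top hfp hqp).ne).symm
end
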